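/- Let f ∈ L¹([−π,π]) be real-valued and even. Then for every n there exist a real unitary n×n matrix V_n and orderings of the eigenvalues of T_n(f) and H_n(f) such that Y_n = V_n Δ_n V_nᵀ with Δ_n = diag_{i=1,…,n}((−1)^{i+1}), T_n(f) = V_n D_n V_nᵀ with D_n = diag_{i=1,…,n}(λ_i(T_n(f))), H_n(f) = V_n Δ_n D_n V_nᵀ, and λ_i(H_n(f)) = (−1)^{i+1} λ_i(T_n(f)) for i = 1,…,n. In particular, if f is not almost everywhere constant, then all eigenvalues of H_n(f) lie in (m_f, M_f) ∪ (−M_f, −m_f), where m_f = ess inf_{[−π,π]} f and M_f = ess sup_{[−π,π]} f. -/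

import Mathlib

/-!
The matrix `T = T_n(f)` is real symmetric Toeplitz, so it commutes with the flip `Y`. For a real `c`
larger than every `|λ|`, `λ` an eigenvalue of `T`, each eigenvector of the symmetric matrix `T + cY`
is an eigenvector of both `T` and `Y` (`joint_eigenvector`), so an orthonormal eigenbasis of
`T + cY` diagonalizes both. The trace of `Y` determines how often `1` and `-1` occur, and they occur
as often as in the alternating sequence; permuting the basis puts them in that order
(`exists_ordered_diag`). The factorization of `YT` and its eigenvalues follow.

For the localization, an eigenvector `v` of `T` with eigenvalue `l` satisfies
`∫ (f - l)|p|² = 0` with `p(x) = ∑ⱼ vⱼ e^{ijx}`, which has only countably many zeros. If `l` were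
not strictly between the essential infimum and supremum, then `f - l` would have constant sign
a.e., forcing `f = l` a.e. (`ae_eq_of_eigen`, `eigen_bounds`).
-/

open MeasureTheory Matrix Filter

/-- The `k`-th Fourier coefficient of `f : ℝ → ℂ` on `[-π, π]`. -/
noncomputable def fourierCoef (f : ℝ → ℂ) (k : ℤ) : ℂ :=
  (1 / (2 * Real.pi)) * ∫ x in (-Real.pi)..Real.pi, f x * Complex.exp (-Complex.I * k * x)

/-- The `n × n` Toeplitz matrix generated by `f` (real version). -/
noncomputable def toeplitzR (f : ℝ → ℂ) (n : ℕ) : Matrix (Fin n) (Fin n) ℝ :=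
  Matrix.of fun i j => (fourierCoef f ((i : ℤ) - (j : ℤ))).re

/-- The `n × n` exchange (flip) matrix `Y_n`. -/
def flipM (n : ℕ) : Matrix (Fin n) (Fin n) ℝ :=
  Matrix.of fun i j => if (i : ℕ) + (j : ℕ) = n - 1 then 1 else 0

/-- Essential range of a real-valued function on a set. -/
def essRangeR (f : ℝ → ℝ) (s : Set ℝ) : Set ℝ :=
  {z : ℝ | ∀ ε > 0, 0 < volume {x ∈ s | |f x - z| < ε}}

/-! ### Simultaneous diagonalization with the flip matrix -/

/-- If the involution `Y` commutes with `T` and `c` exceeds every `|λ|`, `λ` an eigenvalue of `T`, then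
every eigenvector of `T + cY` is a joint eigenvector: its components `v ± Yv` in the eigenspaces of
`Y` satisfy `T(v ± Yv) = (m ∓ c)(v ± Yv)`, and `m - c > -c`, `m + c < c` cannot both hold, so one of
the two components vanishes. -/
theorem joint_eigenvector {n : ℕ} {T Y : Matrix (Fin n) (Fin n) ℝ} (hYY : Y * Y = 1)
    (hc : Y * T = T * Y) {c m : ℝ} {v : Fin n → ℝ}
    (hbound : ∀ (l : ℝ) (w : Fin n → ℝ), w ≠ 0 → T *ᵥ w = l • w → |l| < c)
    (hv : (T + c • Y) *ᵥ v = m • v) :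
    ∃ d t : ℝ, (d = 1 ∨ d = -1) ∧ Y *ᵥ v = d • v ∧ T *ᵥ v = t • v := by
  have h1 : T *ᵥ v + c • Y *ᵥ v = m • v := by
    rw [← hv, add_mulVec, smul_mulVec]
  have h2 : T *ᵥ (Y *ᵥ v) + c • v = m • Y *ᵥ v := by
    have := congrArg (fun w => Y *ᵥ w) h1
    simpa [mulVec_add, mulVec_smul, mulVec_mulVec, hYY, hc] using this
  have ha : T *ᵥ (v + Y *ᵥ v) = (m - c) • (v + Y *ᵥ v) := by
    rw [mulVec_add, eq_sub_of_add_eq h1, eq_sub_of_add_eq h2]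
    module
  have hb : T *ᵥ (v - Y *ᵥ v) = (m + c) • (v - Y *ᵥ v) := by
    rw [mulVec_sub, eq_sub_of_add_eq h1, eq_sub_of_add_eq h2]
    module
  by_cases ha0 : v + Y *ᵥ v = 0
  · have hY : Y *ᵥ v = (-1 : ℝ) • v := by rw [neg_one_smul]; exact eq_neg_of_add_eq_zero_right ha0
    refine ⟨-1, m + c, Or.inr rfl, hY, ?_⟩
    rw [eq_sub_of_add_eq h1, hY]; module
  by_cases hb0 : v - Y *ᵥ v = 0
  · have hY : Y *ᵥ v = (1 : ℝ) • v := by rw [one_smul]; exact (sub_eq_zero.mp hb0).symm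
    refine ⟨1, m - c, Or.inl rfl, hY, ?_⟩
    rw [eq_sub_of_add_eq h1, hY]; module
  have h3 := abs_lt.mp (hbound _ _ ha0 ha)
  have h4 := abs_lt.mp (hbound _ _ hb0 hb)
  linarith [h3.1, h4.2]

theorem exists_eigenvalue_bound {n : ℕ} (T : Matrix (Fin n) (Fin n) ℝ) :
    ∃ c : ℝ, ∀ (l : ℝ) (w : Fin n → ℝ), w ≠ 0 → T *ᵥ w = l • w → |l| < c := by
  have hfin : {l : ℝ | Module.End.HasEigenvalue (Matrix.toLin' T) l}.Finite :=
    Module.End.finite_hasEigenvalue _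
  obtain ⟨B, hB⟩ := (hfin.image (fun l => |l|)).bddAbove
  refine ⟨B + 1, fun l w hw h => ?_⟩
  have : |l| ≤ B := hB ⟨l, Module.End.hasEigenvalue_of_hasEigenvector
    (x := w) ⟨Module.End.mem_eigenspace_iff.mpr (by simpa using h), hw⟩, rfl⟩
  linarith

theorem exists_joint_diag {n : ℕ} {T Y : Matrix (Fin n) (Fin n) ℝ} (hT : T.IsHermitian)
    (hY : Y.IsHermitian) (hYY : Y * Y = 1) (hc : Y * T = T * Y) :
    ∃ (V : Matrix (Fin n) (Fin n) ℝ) (d t : Fin n → ℝ), V * Vᵀ = 1 ∧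
      (∀ i, d i = 1 ∨ d i = -1) ∧ Y = V * diagonal d * Vᵀ ∧ T = V * diagonal t * Vᵀ := by
  obtain ⟨c, hcb⟩ := exists_eigenvalue_bound T
  have hM : (T + c • Y).IsHermitian := by
    refine hT.add ?_
    unfold Matrix.IsHermitian
    rw [conjTranspose_smul, hY.eq, star_trivial]
  have key := fun i => joint_eigenvector hYY hc hcb (hM.mulVec_eigenvectorBasis i)
  choose d t hd hYv hTv using key
  set V : Matrix (Fin n) (Fin n) ℝ := (hM.eigenvectorUnitary : Matrix (Fin n) (Fin n) ℝ) with hV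
  have hVV : V * Vᵀ = 1 := by
    have := (Matrix.mem_unitaryGroup_iff).mp hM.eigenvectorUnitary.2
    rwa [star_eq_conjTranspose, conjTranspose_eq_transpose_of_trivial] at this
  have aux : ∀ (A : Matrix (Fin n) (Fin n) ℝ) (e : Fin n → ℝ),
      (∀ i, A *ᵥ ⇑(hM.eigenvectorBasis i) = e i • ⇑(hM.eigenvectorBasis i)) →
      A = V * diagonal e * Vᵀ := by
    intro A e h
    have : A * V = V * diagonal e := by
      ext i j
      have := congrFun (h j) i
      rw [mul_diagonal, mul_apply]
      simp only [hV, Matrix.IsHermitian.eigenvectorUnitary_apply]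
      simpa [mulVec, dotProduct, mul_comm] using this
    rw [← this, Matrix.mul_assoc, hVV, Matrix.mul_one]
  exact ⟨V, d, t, hVV, hd, aux Y d hYv, aux T t hTv⟩

/-- Two sign vectors with the same sum agree up to a permutation of the indices. -/
theorem exists_perm {n : ℕ} {d e : Fin n → ℝ} (hd : ∀ i, d i = 1 ∨ d i = -1)
    (he : ∀ i, e i = 1 ∨ e i = -1) (hsum : ∑ i, d i = ∑ i, e i) :
    ∃ σ : Equiv.Perm (Fin n), ∀ i, d (σ i) = e i := by
  have hcount : ∀ g : Fin n → ℝ, (∀ i, g i = 1 ∨ g i = -1) →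
      ∑ i, g i = 2 * (Fintype.card {i // g i = 1} : ℝ) - n := by
    intro g hg
    have : ∀ i, g i = 2 * (if g i = 1 then 1 else 0) - 1 := by
      intro i
      rcases hg i with h | h <;> rw [h] <;> norm_num
    rw [Finset.sum_congr rfl fun i _ => this i, Finset.sum_sub_distrib, ← Finset.mul_sum,
      Finset.sum_boole, Fintype.card_subtype]
    simp
  have hcard : Fintype.card {i // e i = 1} = Fintype.card {i // d i = 1} := by
    rw [hcount d hd, hcount e he] at hsum
    have : (Fintype.card {i // e i = 1} : ℝ) = Fintype.card {i // d i = 1} := by linarith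
    exact_mod_cast this
  let E := Fintype.equivOfCardEq hcard
  refine ⟨E.extendSubtype, fun i => ?_⟩
  rcases he i with h | h
  · rw [h]; exact E.extendSubtype_mem i h
  · have := E.extendSubtype_not_mem i (by rw [h]; norm_num)
    rw [h]; exact (hd _).resolve_left this

theorem flipM_apply_rev {n : ℕ} (i j : Fin n) : flipM n i j = if j = i.rev then 1 else 0 := by
  simp only [flipM, of_apply, Fin.ext_iff, Fin.val_rev]
  congr 1
  apply propext; omega

theorem flipM_mul_apply {n : ℕ} (A : Matrix (Fin n) (Fin n) ℝ) (i j : Fin n) :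
    (flipM n * A) i j = A i.rev j := by
  simp [mul_apply, flipM_apply_rev]

theorem flipM_symm (n : ℕ) : (flipM n)ᵀ = flipM n := by
  ext i j; simp [flipM, add_comm]

theorem mul_flipM_apply {n : ℕ} (A : Matrix (Fin n) (Fin n) ℝ) (i j : Fin n) :
    (A * flipM n) i j = A i j.rev := by
  rw [← flipM_symm, mul_apply]
  simp [flipM_apply_rev]

theorem flipM_mul_self (n : ℕ) : flipM n * flipM n = 1 := by
  ext i j
  rw [flipM_mul_apply, flipM_apply_rev, Fin.rev_rev, one_apply]
  simp [eq_comm]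

/-- The trace of `Y_n` (`1` for odd `n`, `0` for even `n`) is the sum of the alternating signs; this
fixes the multiplicities of the eigenvalues `±1` of `Y_n`. -/
theorem trace_flipM (n : ℕ) : (flipM n).trace = ∑ i : Fin n, (-1 : ℝ) ^ (i : ℕ) := by
  rw [Fin.sum_univ_eq_sum_range (fun i => (-1 : ℝ) ^ i) n, neg_one_geom_sum]
  simp only [trace, diag_apply, flipM, of_apply]
  rw [Fin.sum_univ_eq_sum_range (fun i => if i + i = n - 1 then (1 : ℝ) else 0) n]
  split_ifs with h
  · refine Finset.sum_eq_zero fun i hi => if_neg ?_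
    rw [Finset.mem_range] at hi
    obtain ⟨k, rfl⟩ := h
    omega
  · obtain ⟨k, rfl⟩ := Nat.not_even_iff_odd.mp h
    rw [Finset.sum_eq_single k]
    · rw [if_pos (by omega)]
    · intro i _ hi; exact if_neg (by omega)
    · intro hk; exact absurd (Finset.mem_range.mpr (by omega)) hk

/-- Simultaneous diagonalization of `Y_n` and a symmetric matrix commuting with it, ordered so that
the eigenvalues of `Y_n` alternate in sign. -/
theorem exists_ordered_diag {n : ℕ} {T : Matrix (Fin n) (Fin n) ℝ} (hT : Tᵀ = T)
    (hc : flipM n * T = T * flipM n) :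
    ∃ (V : Matrix (Fin n) (Fin n) ℝ) (t : Fin n → ℝ), V * Vᵀ = 1 ∧
      flipM n = V * diagonal (fun i : Fin n => ((-1 : ℝ)) ^ (i : ℕ)) * Vᵀ ∧
      T = V * diagonal t * Vᵀ := by
  obtain ⟨V, d, t, hV, hd, hY, hTdiag⟩ := exists_joint_diag (T := T) (Y := flipM n)
    (by rwa [Matrix.IsHermitian, conjTranspose_eq_transpose_of_trivial])
    (by rw [Matrix.IsHermitian, conjTranspose_eq_transpose_of_trivial, flipM_symm])
    (flipM_mul_self n) hc
  have htr : ∑ i, d i = ∑ i : Fin n, (-1 : ℝ) ^ (i : ℕ) := by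
    rw [← trace_flipM, hY, trace_mul_comm, ← Matrix.mul_assoc, mul_eq_one_comm.mp hV,
      Matrix.one_mul, trace_diagonal]
  obtain ⟨σ, hσ⟩ := exists_perm hd (fun i => neg_one_pow_eq_or ℝ (i : ℕ)) htr
  have hperm : ∀ e : Fin n → ℝ, V.submatrix id σ * diagonal (fun i => e (σ i)) *
      (V.submatrix id σ)ᵀ = V * diagonal e * Vᵀ := by
    intro e
    have : diagonal (fun i => e (σ i)) = (diagonal e).submatrix σ σ :=
      (submatrix_diagonal_equiv e σ).symm
    rw [this, transpose_submatrix, submatrix_mul_equiv, submatrix_mul_equiv, submatrix_id_id]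
  refine ⟨V.submatrix id σ, fun i => t (σ i), ?_, ?_, ?_⟩
  · rw [transpose_submatrix, submatrix_mul_equiv, hV, submatrix_id_id]
  · rw [← funext hσ, hperm d]; exact hY
  · rw [hperm t]; exact hTdiag

/-! ### Quadratic form of a Toeplitz matrix and localization of eigenvalues -/

theorem fourierCoef_ofReal_re {f : ℝ → ℝ} (hf : IntegrableOn f (Set.Icc (-Real.pi) Real.pi))
    (k : ℤ) : (fourierCoef (fun x => (f x : ℂ)) k).re =
      (2 * Real.pi)⁻¹ * ∫ x in Set.Icc (-Real.pi) Real.pi, f x * Real.cos (k * x) := by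
  have hpi : -Real.pi ≤ Real.pi := by linarith [Real.pi_pos]
  have hI : IntegrableOn (fun x : ℝ => (f x : ℂ) * Complex.exp (-Complex.I * k * x))
      (Set.Icc (-Real.pi) Real.pi) := by
    refine IntegrableOn.mul_continuousOn hf.ofReal ?_ isCompact_Icc
    fun_prop
  rw [fourierCoef, intervalIntegral.integral_of_le hpi, ← integral_Icc_eq_integral_Ioc]
  have h1 : (1 / (2 * (Real.pi : ℂ))) = (((2 * Real.pi)⁻¹ : ℝ) : ℂ) := by push_cast; simp
  rw [h1, Complex.re_ofReal_mul]
  congr 1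
  have h2 := integral_re hI
  simp only [RCLike.re_to_complex] at h2
  rw [← h2]
  congr 1
  ext x
  rw [Complex.re_ofReal_mul]
  congr 1
  have : -Complex.I * k * x = ((-(k * x) : ℝ) : ℂ) * Complex.I := by push_cast; ring
  rw [this, Complex.exp_ofReal_mul_I_re, Real.cos_neg]

theorem integral_cos_int (k : ℤ) :
    ∫ x in Set.Icc (-Real.pi) Real.pi, Real.cos (k * x) = if k = 0 then 2 * Real.pi else 0 := by
  have hpi : -Real.pi ≤ Real.pi := by linarith [Real.pi_pos]
  rw [integral_Icc_eq_integral_Ioc, ← intervalIntegral.integral_of_le hpi]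
  split_ifs with h
  · subst h; simp; ring
  · have hk : (k : ℝ) ≠ 0 := by exact_mod_cast h
    rw [intervalIntegral.integral_comp_mul_left _ hk, integral_cos]
    simp [Real.sin_int_mul_pi]

/-- The squared modulus `|∑ⱼ vⱼ e^{ijx}|²` of the trigonometric polynomial with real coefficient
vector `v`, in expanded form. -/
noncomputable def trigWeight {n : ℕ} (v : Fin n → ℝ) (x : ℝ) : ℝ :=
  ∑ i, ∑ j, v i * v j * Real.cos ((((i : ℤ) - (j : ℤ) : ℤ) : ℝ) * x)

theorem trigWeight_eq {n : ℕ} (v : Fin n → ℝ) (x : ℝ) : trigWeight v x =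
    (∑ i : Fin n, v i * Real.cos (i * x)) ^ 2 + (∑ i : Fin n, v i * Real.sin (i * x)) ^ 2 := by
  rw [trigWeight, sq, sq, Finset.sum_mul_sum, Finset.sum_mul_sum, ← Finset.sum_add_distrib]
  refine Finset.sum_congr rfl fun i _ => ?_
  rw [← Finset.sum_add_distrib]
  refine Finset.sum_congr rfl fun j _ => ?_
  push_cast
  rw [sub_mul, Real.cos_sub]
  ring

theorem trigWeight_nonneg {n : ℕ} (v : Fin n → ℝ) (x : ℝ) : 0 ≤ trigWeight v x := by
  rw [trigWeight_eq]; positivity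

theorem continuous_trigWeight {n : ℕ} (v : Fin n → ℝ) : Continuous (trigWeight v) := by
  unfold trigWeight; fun_prop

/-- A zero `x` of the weight gives a root `e^{ix}` of the nonzero polynomial `∑ⱼ vⱼ zʲ`, so there are
only countably many zeros. -/
theorem ae_trigWeight_ne_zero {n : ℕ} {v : Fin n → ℝ} (hv : v ≠ 0) :
    ∀ᵐ x : ℝ, trigWeight v x ≠ 0 := by
  let P : Polynomial ℂ := ∑ i : Fin n, Polynomial.monomial (i : ℕ) (v i : ℂ)
  have hP : P ≠ 0 := by
    obtain ⟨i, hi⟩ := Function.ne_iff.mp hv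
    intro h
    have := congrArg (fun Q => Q.coeff (i : ℕ)) h
    simp [P, Polynomial.coeff_monomial, Fin.val_inj] at this
    exact hi this
  have heval : ∀ x : ℝ, trigWeight v x = 0 → P.IsRoot (Complex.exp (x * Complex.I)) := by
    intro x hx
    rw [trigWeight_eq] at hx
    have hc : ∑ i : Fin n, v i * Real.cos (i * x) = 0 := by
      nlinarith [sq_nonneg (∑ i : Fin n, v i * Real.cos (i * x)),
        sq_nonneg (∑ i : Fin n, v i * Real.sin (i * x))]
    have hs : ∑ i : Fin n, v i * Real.sin (i * x) = 0 := by
      nlinarith [sq_nonneg (∑ i : Fin n, v i * Real.cos (i * x)),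
        sq_nonneg (∑ i : Fin n, v i * Real.sin (i * x))]
    have : P.eval (Complex.exp (x * Complex.I)) =
        ((∑ i : Fin n, v i * Real.cos (i * x) : ℝ) : ℂ) +
        ((∑ i : Fin n, v i * Real.sin (i * x) : ℝ) : ℂ) * Complex.I := by
      push_cast
      rw [Finset.sum_mul, ← Finset.sum_add_distrib]
      simp only [P, Polynomial.eval_finsetSum, Polynomial.eval_monomial]
      refine Finset.sum_congr rfl fun i _ => ?_
      rw [← Complex.exp_nat_mul, ← mul_assoc, Complex.exp_mul_I]
      ring
    rw [Polynomial.IsRoot, this, hc, hs]; simp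
  have hcount : {x : ℝ | trigWeight v x = 0}.Countable := by
    refine Set.Countable.mono (s₂ := ⋃ r ∈ P.rootSet ℂ, ⋃ k : ℤ,
      {r.arg + k * (2 * Real.pi)}) ?_ ?_
    · intro x hx
      have hr := heval x hx
      simp only [Set.mem_iUnion, Set.mem_singleton_iff]
      refine ⟨_, (Polynomial.mem_rootSet_of_ne hP).mpr (by simpa using hr), ?_⟩
      have h1 : Complex.exp (x * Complex.I) =
          Complex.exp ((Complex.exp (x * Complex.I)).arg * Complex.I) := by
        have := Complex.norm_mul_exp_arg_mul_I (Complex.exp (x * Complex.I))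
        rw [Complex.norm_exp_ofReal_mul_I] at this
        simpa using this.symm
      obtain ⟨k, hk⟩ := Complex.exp_eq_exp_iff_exists_int.mp h1
      refine ⟨k, ?_⟩
      have := congrArg Complex.im hk
      simpa using this
    · exact (P.rootSet_finite ℂ).countable.biUnion fun r _ =>
        Set.countable_iUnion fun k => Set.countable_singleton _
  exact hcount.ae_notMem volume

/-- `vᵀ T_n(f) v = (1/2π) ∫ f(x) |∑ⱼ vⱼ e^{ijx}|² dx`. -/
theorem toeplitz_form {f : ℝ → ℝ} (hf : IntegrableOn f (Set.Icc (-Real.pi) Real.pi)) {n : ℕ}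
    (v : Fin n → ℝ) : v ⬝ᵥ toeplitzR (fun x => (f x : ℂ)) n *ᵥ v =
      (2 * Real.pi)⁻¹ * ∫ x in Set.Icc (-Real.pi) Real.pi, f x * trigWeight v x := by
  have hI : ∀ i j : Fin n, IntegrableOn (fun x => v i * v j * (f x *
      Real.cos ((((i : ℤ) - (j : ℤ) : ℤ) : ℝ) * x))) (Set.Icc (-Real.pi) Real.pi) := fun i j =>
    (IntegrableOn.mul_continuousOn hf (by fun_prop) isCompact_Icc).const_mul _
  have h1 : ∀ x, f x * trigWeight v x = ∑ i, ∑ j, v i * v j * (f x *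
      Real.cos ((((i : ℤ) - (j : ℤ) : ℤ) : ℝ) * x)) := by
    intro x
    simp only [trigWeight, Finset.mul_sum]
    refine Finset.sum_congr rfl fun i _ => Finset.sum_congr rfl fun j _ => by ring
  simp only [h1]
  rw [integral_finsetSum _ fun i _ => integrable_finsetSum _ fun j _ => hI i j, Finset.mul_sum]
  simp only [dotProduct, mulVec]
  refine Finset.sum_congr rfl fun i _ => ?_
  rw [integral_finsetSum _ fun j _ => hI i j, Finset.mul_sum, Finset.mul_sum]
  refine Finset.sum_congr rfl fun j _ => ?_
  rw [toeplitzR, of_apply, fourierCoef_ofReal_re hf, integral_const_mul]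
  ring

theorem toeplitzR_one (n : ℕ) : toeplitzR (fun _ => ((1 : ℝ) : ℂ)) n = 1 := by
  ext i j
  rw [toeplitzR, of_apply, fourierCoef_ofReal_re (f := fun _ => 1) (by simp), one_apply]
  simp only [one_mul, integral_cos_int, sub_eq_zero, Nat.cast_inj, Fin.val_inj]
  split_ifs
  · field_simp
  · simp

theorem toeplitz_eigen {f : ℝ → ℝ} (hf : IntegrableOn f (Set.Icc (-Real.pi) Real.pi)) {n : ℕ}
    {v : Fin n → ℝ} {l : ℝ} (h : toeplitzR (fun x => (f x : ℂ)) n *ᵥ v = l • v) :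
    ∫ x in Set.Icc (-Real.pi) Real.pi, (f x - l) * trigWeight v x = 0 := by
  have h1 := toeplitz_form hf v
  have h2 := toeplitz_form (f := fun _ => 1) (by simp) v
  rw [toeplitzR_one, one_mulVec] at h2
  rw [h, dotProduct_smul, h2, smul_eq_mul] at h1
  have hw := (continuous_trigWeight v).continuousOn (s := Set.Icc (-Real.pi) Real.pi)
  have e : ∀ x, (f x - l) * trigWeight v x = f x * trigWeight v x - l * (1 * trigWeight v x) :=
    fun x => by ring
  simp only [e]
  rw [integral_sub (IntegrableOn.mul_continuousOn hf hw isCompact_Icc)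
    (by simpa using (hw.integrableOn_compact isCompact_Icc).const_mul l), integral_const_mul]
  have : (2 * Real.pi)⁻¹ ≠ 0 := by positivity
  refine (mul_right_injective₀ this) ?_
  simp only
  linear_combination -h1

/-- If an eigenvalue `l` of `T_n(f)` bounds `f` a.e. from one side, then `(f - l)|p|²` has constant
sign and vanishing integral, where `p` is the trigonometric polynomial of an eigenvector; hence
`f = l` a.e. -/
theorem ae_eq_of_eigen {f : ℝ → ℝ} (hf : IntegrableOn f (Set.Icc (-Real.pi) Real.pi)) {n : ℕ}
    {v : Fin n → ℝ} (hv : v ≠ 0) {l : ℝ} (h : toeplitzR (fun x => (f x : ℂ)) n *ᵥ v = l • v)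
    (hs : (∀ᵐ x ∂(volume.restrict (Set.Icc (-Real.pi) Real.pi)), l ≤ f x) ∨
      (∀ᵐ x ∂(volume.restrict (Set.Icc (-Real.pi) Real.pi)), f x ≤ l)) :
    ∀ᵐ x ∂(volume.restrict (Set.Icc (-Real.pi) Real.pi)), f x = l := by
  have hw := (continuous_trigWeight v).continuousOn (s := Set.Icc (-Real.pi) Real.pi)
  have hfl : IntegrableOn (fun x => f x - l) (Set.Icc (-Real.pi) Real.pi) :=
    hf.sub (by simp)
  have hI : IntegrableOn (fun x => (f x - l) * trigWeight v x) (Set.Icc (-Real.pi) Real.pi) :=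
    IntegrableOn.mul_continuousOn hfl hw isCompact_Icc
  have h0 := toeplitz_eigen hf h
  have hz : (fun x => (f x - l) * trigWeight v x)
      =ᵐ[volume.restrict (Set.Icc (-Real.pi) Real.pi)] 0 := by
    rcases hs with hs | hs
    · refine (integral_eq_zero_iff_of_nonneg_ae ?_ hI).mp h0
      filter_upwards [hs] with x hx
      exact mul_nonneg (sub_nonneg.mpr hx) (trigWeight_nonneg v x)
    · have := (integral_eq_zero_iff_of_nonneg_ae ?_ hI.neg).mp ?_
      · filter_upwards [this] with x hx
        simpa using hx
      · filter_upwards [hs] with x hx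
        simp only [Pi.zero_apply, Pi.neg_apply, Left.nonneg_neg_iff]
        exact mul_nonpos_of_nonpos_of_nonneg (sub_nonpos.mpr hx) (trigWeight_nonneg v x)
      · simp only [Pi.neg_apply, integral_neg, h0, neg_zero]
  filter_upwards [hz, ae_restrict_of_ae (ae_trigWeight_ne_zero hv)] with x hx hwx
  exact sub_eq_zero.mp ((mul_eq_zero.mp hx).resolve_right hwx)

/-- A function a.e. avoids every measurable set disjoint from its essential range: such a set is
locally null for the push-forward measure, and `ℝ` is second countable. -/
theorem ae_notMem_of_disjoint_essRange {f : ℝ → ℝ} {s : Set ℝ} (hs : MeasurableSet s)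
    (hf : AEMeasurable f (volume.restrict s)) {U : Set ℝ} (hU : MeasurableSet U)
    (hd : ∀ z ∈ U, z ∉ essRangeR f s) : ∀ᵐ x ∂(volume.restrict s), f x ∉ U := by
  have hnull : (volume.restrict s).map f U = 0 := by
    refine measure_null_of_locally_null U fun z hz => ?_
    have := hd z hz
    simp only [essRangeR, Set.mem_ofPred_eq, not_forall, not_lt, nonpos_iff_eq_zero] at this
    obtain ⟨ε, hε, h0⟩ := this
    refine ⟨Metric.ball z ε, mem_nhdsWithin_of_mem_nhds (Metric.ball_mem_nhds z hε), ?_⟩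
    rw [Measure.map_apply_of_aemeasurable hf Metric.isOpen_ball.measurableSet,
      Measure.restrict_apply' hs]
    rw [← h0]
    congr 1
    ext x
    simp [Real.dist_eq, and_comm]
  rw [Measure.map_apply_of_aemeasurable hf hU] at hnull
  rw [ae_iff]
  simp only [not_not]
  exact hnull

theorem eigen_bounds {f : ℝ → ℝ} (hf : IntegrableOn f (Set.Icc (-Real.pi) Real.pi))
    (hne : ¬ ∃ c : ℝ, ∀ᵐ x ∂(volume.restrict (Set.Icc (-Real.pi) Real.pi)), f x = c) {n : ℕ}
    {v : Fin n → ℝ} (hv : v ≠ 0) {l : ℝ} (h : toeplitzR (fun x => (f x : ℂ)) n *ᵥ v = l • v) :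
    sInf ((fun t : ℝ => (t : EReal)) '' essRangeR f (Set.Icc (-Real.pi) Real.pi)) < (l : EReal) ∧
    (l : EReal) < sSup ((fun t : ℝ => (t : EReal)) '' essRangeR f (Set.Icc (-Real.pi) Real.pi)) := by
  constructor
  · by_contra! hle
    refine hne ⟨l, ae_eq_of_eigen hf hv h (Or.inl ?_)⟩
    have := ae_notMem_of_disjoint_essRange measurableSet_Icc hf.aemeasurable
      (measurableSet_Iio (a := l)) fun z hz hmem =>
        not_le.mpr hz (EReal.coe_le_coe_iff.mp (hle.trans (sInf_le ⟨z, hmem, rfl⟩)))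
    simpa using this
  · by_contra! hle
    refine hne ⟨l, ae_eq_of_eigen hf hv h (Or.inr ?_)⟩
    have := ae_notMem_of_disjoint_essRange measurableSet_Icc hf.aemeasurable
      (measurableSet_Ioi (a := l)) fun z hz hmem =>
        not_le.mpr hz (EReal.coe_le_coe_iff.mp ((le_sSup (Set.mem_image_of_mem _ hmem)).trans hle))
    simpa using this

theorem fourierCoef_re_neg {f : ℝ → ℝ} (hf : IntegrableOn f (Set.Icc (-Real.pi) Real.pi))
    (k : ℤ) : (fourierCoef (fun x => (f x : ℂ)) (-k)).re =
      (fourierCoef (fun x => (f x : ℂ)) k).re := by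
  rw [fourierCoef_ofReal_re hf, fourierCoef_ofReal_re hf]
  simp

theorem toeplitzR_transpose {f : ℝ → ℝ} (hf : IntegrableOn f (Set.Icc (-Real.pi) Real.pi))
    (n : ℕ) : (toeplitzR (fun x => (f x : ℂ)) n)ᵀ = toeplitzR (fun x => (f x : ℂ)) n := by
  ext i j
  rw [transpose_apply, toeplitzR, of_apply, of_apply, ← fourierCoef_re_neg hf, neg_sub]

theorem flipM_commute_toeplitzR {f : ℝ → ℝ}
    (hf : IntegrableOn f (Set.Icc (-Real.pi) Real.pi)) (n : ℕ) :
    flipM n * toeplitzR (fun x => (f x : ℂ)) n = toeplitzR (fun x => (f x : ℂ)) n * flipM n := by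
  ext i j
  rw [flipM_mul_apply, mul_flipM_apply, toeplitzR, of_apply, of_apply, ← fourierCoef_re_neg hf]
  congr 2
  have hi := i.isLt
  have hj := j.isLt
  rw [Fin.val_rev, Fin.val_rev]
  omega

/-- Let `f ∈ L¹([-π,π])` be real-valued and even.  Then for every `n`
there exist a real unitary `V_n` and orderings of the eigenvalues of `T_n(f)` and `H_n(f)`
with `Y_n = V_n Δ_n V_nᵀ`, `T_n(f) = V_n D_n V_nᵀ`, `H_n(f) = V_n Δ_n D_n V_nᵀ` and
`λ_i(H_n(f)) = (-1)^{i+1} λ_i(T_n(f))`.  If moreover `f` is not a.e. constant, then all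
eigenvalues of `H_n(f)` lie in `(m_f, M_f) ∪ (-M_f, -m_f)` (as extended reals), where
`m_f = ess inf f` and `M_f = ess sup f` over `[-π,π]`. -/
theorem stmt12
    (f : ℝ → ℝ)
    (hf_int : IntegrableOn f (Set.Icc (-Real.pi) Real.pi))
    (hf_even : ∀ x, f (-x) = f x) :
    ∃ (V : (n : ℕ) → Matrix (Fin n) (Fin n) ℝ) (lamT lamH : (n : ℕ) → Fin n → ℝ),
      (∀ n : ℕ,
        V n * (V n)ᵀ = 1 ∧
        flipM n = V n * Matrix.diagonal (fun i : Fin n => ((-1 : ℝ)) ^ (i : ℕ)) * (V n)ᵀ ∧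
        toeplitzR (fun x => (f x : ℂ)) n = V n * Matrix.diagonal (lamT n) * (V n)ᵀ ∧
        flipM n * toeplitzR (fun x => (f x : ℂ)) n
          = V n * (Matrix.diagonal (fun i : Fin n => ((-1 : ℝ)) ^ (i : ℕ))
              * Matrix.diagonal (lamT n)) * (V n)ᵀ ∧
        (∀ i : Fin n, lamH n i = (-1 : ℝ) ^ (i : ℕ) * lamT n i)) ∧
      ((¬ ∃ c : ℝ, ∀ᵐ x ∂(volume.restrict (Set.Icc (-Real.pi) Real.pi)), f x = c) →
        ∀ n : ℕ, ∀ i : Fin n,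
          (sInf ((fun t : ℝ => (t : EReal)) '' essRangeR f (Set.Icc (-Real.pi) Real.pi))
              < (lamH n i : EReal) ∧
            (lamH n i : EReal)
              < sSup ((fun t : ℝ => (t : EReal)) '' essRangeR f (Set.Icc (-Real.pi) Real.pi))) ∨
          (-sSup ((fun t : ℝ => (t : EReal)) '' essRangeR f (Set.Icc (-Real.pi) Real.pi))
              < (lamH n i : EReal) ∧
            (lamH n i : EReal)
              < -sInf ((fun t : ℝ => (t : EReal)) '' essRangeR f (Set.Icc (-Real.pi) Real.pi)))) := by
  choose V t hV hY hT using fun n =>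
    exists_ordered_diag (toeplitzR_transpose hf_int n) (flipM_commute_toeplitzR hf_int n)
  refine ⟨V, t, fun n i => (-1 : ℝ) ^ (i : ℕ) * t n i,
    fun n => ⟨hV n, hY n, hT n, ?_, fun i => rfl⟩, fun hne n i => ?_⟩
  · conv_lhs => rw [hY n, hT n]
    have h1 : (V n)ᵀ * V n = 1 := mul_eq_one_comm.mp (hV n)
    simp only [Matrix.mul_assoc]
    rw [← Matrix.mul_assoc (V n)ᵀ (V n), h1, Matrix.one_mul]
  · have h1 : (V n)ᵀ * V n = 1 := mul_eq_one_comm.mp (hV n)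
    -- The `i`-th column of `V n` is an eigenvector for `t n i`.
    have hv : V n *ᵥ Pi.single i 1 ≠ 0 := by
      intro h0
      have h2 := congrArg (fun w => (V n)ᵀ *ᵥ w) h0
      simp only [mulVec_mulVec, h1, one_mulVec, mulVec_zero] at h2
      simpa using congrFun h2 i
    have he : toeplitzR (fun x => (f x : ℂ)) n *ᵥ (V n *ᵥ Pi.single i 1) =
        t n i • (V n *ᵥ Pi.single i 1) := by
      rw [hT n, mulVec_mulVec, Matrix.mul_assoc, h1, Matrix.mul_one, ← mulVec_mulVec,
        diagonal_mulVec_single, ← mulVec_smul, mul_one, ← Pi.single_smul, smul_eq_mul, mul_one]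
    have hb := eigen_bounds hf_int hne hv he
    rcases neg_one_pow_eq_or ℝ (i : ℕ) with h | h
    · left
      simpa only [h, one_mul] using hb
    · right
      simp only [h, neg_one_mul, EReal.coe_neg, EReal.neg_lt_neg_iff]
      exact ⟨hb.2, hb.1⟩
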